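/- In every execution of the Hemlock transition-system model, for every lock L: if thread T_i is the next thread to execute the entry doorstep for L after thread T_j executes the entry doorstep for L, then T_i enters the critical section protected by L after T_j has completed its critical section protected by L. -/

import Mathlib

namespace Hemlock

/-- Program counter locations of a thread in the Hemlock algorithm. -/
inductive PC where
  | remainder  -- in the remainder section
  | entrySpin  -- in the entry code, spinning on the predecessor's Grant field
  | crit       -- in the critical section
  | exitCAS    -- in the exit code, about to perform the CAS on Tail
  | exitDoor   -- in the exit code, about to perform the exit doorstep (write Grant self := some L)
  | exitSpin   -- in the exit code, spinning on its own Grant field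
deriving DecidableEq

/-- A global state of the Hemlock transition system. -/
structure St (Thread Lock : Type) where
  Tail : Lock → Option Thread        -- the Tail field of each lock
  Grant : Thread → Option Lock       -- the Grant field of each thread
  pc : Thread → PC                   -- program counter of each thread
  lk : Thread → Option Lock          -- the lock currently being acquired/released by each thread
  pred : Thread → Option Thread      -- value returned by each thread's last SWAP

variable {Thread Lock : Type} [DecidableEq Thread] [DecidableEq Lock]

/-- The initial state: all Tail and Grant fields are none, all threads in the remainder. -/
def initSt : St Thread Lock :=
  ⟨fun _ => none, fun _ => none, fun _ => .remainder, fun _ => none, fun _ => none⟩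

/-- One atomic transition of thread `t`. -/
inductive Step (t : Thread) : St Thread Lock → St Thread Lock → Prop where
  /-- a step inside the remainder section -/
  | remainderStay (s : St Thread Lock) (h : s.pc t = .remainder) :
      Step t s s
  /-- the entry doorstep for lock `L`: atomic SWAP on `Tail L`, storing the old value in `pred`;
      if the SWAP returned `none` the thread enters the critical section, else it spins -/
  | doorstep (s : St Thread Lock) (L : Lock) (h : s.pc t = .remainder) :
      Step t s ⟨Function.update s.Tail L (some t), s.Grant,
        Function.update s.pc t (if s.Tail L = none then .crit else .entrySpin),
        Function.update s.lk t (some L),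
        Function.update s.pred t (s.Tail L)⟩
  /-- entry-code busy-wait loop: read `Grant p`; it is not yet `some L`, keep spinning -/
  | spinWait (s : St Thread Lock) (p : Thread) (L : Lock)
      (h : s.pc t = .entrySpin) (hp : s.pred t = some p) (hl : s.lk t = some L)
      (hg : s.Grant p ≠ some L) :
      Step t s s
  /-- entry-code busy-wait loop: read `Grant p = some L`; write `Grant p := none`
      and enter the critical section -/
  | spinAcquire (s : St Thread Lock) (p : Thread) (L : Lock)
      (h : s.pc t = .entrySpin) (hp : s.pred t = some p) (hl : s.lk t = some L)
      (hg : s.Grant p = some L) :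
      Step t s ⟨s.Tail, Function.update s.Grant p none,
        Function.update s.pc t .crit, s.lk, s.pred⟩
  /-- a step inside the critical section -/
  | critStay (s : St Thread Lock) (h : s.pc t = .crit) :
      Step t s s
  /-- leave the critical section and begin the exit code -/
  | exitStart (s : St Thread Lock) (h : s.pc t = .crit) :
      Step t s ⟨s.Tail, s.Grant, Function.update s.pc t .exitCAS, s.lk, s.pred⟩
  /-- successful CAS: `Tail L = some self`, so set `Tail L := none` and
      complete the exit code, returning to the remainder section -/
  | casSucc (s : St Thread Lock) (L : Lock)
      (h : s.pc t = .exitCAS) (hl : s.lk t = some L) (ht : s.Tail L = some t) :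
      Step t s ⟨Function.update s.Tail L none, s.Grant,
        Function.update s.pc t .remainder, Function.update s.lk t none, s.pred⟩
  /-- failed CAS: `Tail L ≠ some self`; proceed to the exit doorstep -/
  | casFail (s : St Thread Lock) (L : Lock)
      (h : s.pc t = .exitCAS) (hl : s.lk t = some L) (ht : s.Tail L ≠ some t) :
      Step t s ⟨s.Tail, s.Grant, Function.update s.pc t .exitDoor, s.lk, s.pred⟩
  /-- the exit doorstep: write `Grant self := some L` and start spinning on `Grant self` -/
  | exitDoorstep (s : St Thread Lock) (L : Lock)
      (h : s.pc t = .exitDoor) (hl : s.lk t = some L) :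
      Step t s ⟨s.Tail, Function.update s.Grant t (some L),
        Function.update s.pc t .exitSpin, s.lk, s.pred⟩
  /-- exit-code busy-wait loop: read `Grant self`; it is not yet `none`, keep spinning -/
  | exitSpinWait (s : St Thread Lock) (h : s.pc t = .exitSpin) (hg : s.Grant t ≠ none) :
      Step t s s
  /-- exit-code busy-wait loop: read `Grant self = none`; complete the exit code,
      returning to the remainder section -/
  | exitDone (s : St Thread Lock) (h : s.pc t = .exitSpin) (hg : s.Grant t = none) :
      Step t s ⟨s.Tail, s.Grant, Function.update s.pc t .remainder,
        Function.update s.lk t none, s.pred⟩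

/-- An execution of the Hemlock transition system: an infinite sequence of states starting
    from the initial state, where each step is one transition of the scheduled thread;
    every thread whose program counter is in the entry, exit or critical section eventually
    takes another step, and every thread leaves each critical section after finitely
    many steps. -/
structure Execution (Thread Lock : Type) [DecidableEq Thread] [DecidableEq Lock]
    [Fintype Thread] where
  states : ℕ → St Thread Lock
  sched : ℕ → Thread
  init : states 0 = initSt
  steps : ∀ n, Step (sched n) (states n) (states (n + 1))
  fair : ∀ n t, (states n).pc t ≠ PC.remainder → ∃ m, n ≤ m ∧ sched m = t
  critFinite : ∀ n t, (states n).pc t = PC.crit → ∃ m, n ≤ m ∧ (states m).pc t ≠ PC.crit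

variable [Fintype Thread]

/-- Thread `t` executes the entry doorstep (the SWAP) for lock `L` at time `n`. -/
def doorstepAt (E : Execution Thread Lock) (n : ℕ) (t : Thread) (L : Lock) : Prop :=
  E.sched n = t ∧ (E.states n).pc t = PC.remainder ∧
    (E.states (n + 1)).pc t ≠ PC.remainder ∧ (E.states (n + 1)).lk t = some L

/-- Thread `t` performs the CAS step of the exit code for lock `L` at time `n`
    (successful or not). -/
def casAt (E : Execution Thread Lock) (n : ℕ) (t : Thread) (L : Lock) : Prop :=
  E.sched n = t ∧ (E.states n).pc t = PC.exitCAS ∧ (E.states n).lk t = some L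

/-- Thread `t` performs the exit doorstep (the write `Grant t := some L`) at time `n`. -/
def exitDoorAt (E : Execution Thread Lock) (n : ℕ) (t : Thread) (L : Lock) : Prop :=
  E.sched n = t ∧ (E.states n).pc t = PC.exitDoor ∧ (E.states n).lk t = some L

/-- Thread `t` is in the critical section protected by `L` in state `s`. -/
def inCS (s : St Thread Lock) (t : Thread) (L : Lock) : Prop :=
  s.pc t = PC.crit ∧ s.lk t = some L

/-- Thread `t` is in the entry code for lock `L` in state `s`. -/
def inEntry (s : St Thread Lock) (t : Thread) (L : Lock) : Prop :=
  s.pc t = PC.entrySpin ∧ s.lk t = some L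

/-- Thread `t` enters the critical section protected by `L` at step `m`. -/
def entersCSAt (E : Execution Thread Lock) (m : ℕ) (t : Thread) (L : Lock) : Prop :=
  E.sched m = t ∧ (E.states m).pc t ≠ PC.crit ∧
    (E.states (m + 1)).pc t = PC.crit ∧ (E.states (m + 1)).lk t = some L

/-- Thread `t` completes its critical section protected by `L` at step `k`
    (leaving the critical section and beginning the exit code). -/
def exitsCSAt (E : Execution Thread Lock) (k : ℕ) (t : Thread) (L : Lock) : Prop :=
  E.sched k = t ∧ (E.states k).pc t = PC.crit ∧ (E.states k).lk t = some L ∧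
    (E.states (k + 1)).pc t ≠ PC.crit

/-- Thread `t` completes the exit code for lock `L` at step `k`
    (returning to the remainder section). -/
def completesExitAt (E : Execution Thread Lock) (k : ℕ) (t : Thread) (L : Lock) : Prop :=
  E.sched k = t ∧ (E.states k).lk t = some L ∧
    (E.states k).pc t ≠ PC.remainder ∧ (E.states (k + 1)).pc t = PC.remainder

/-- `m` is the first time at or after `n` at which thread `t` enters the
    critical section protected by `L`. -/
def firstEntryAfter (E : Execution Thread Lock) (n m : ℕ) (t : Thread) (L : Lock) : Prop :=
  n ≤ m ∧ entersCSAt E m t L ∧ ∀ k, n ≤ k → k < m → ¬ entersCSAt E k t L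

/-- At time `n`, thread `T` is spinning in the entry code waiting for `Grant w`
    to become `some L`: its next step reads `Grant w` inside the entry-code
    busy-wait loop with current lock `L` and `pred = some w`. -/
def spinningEntryFor (E : Execution Thread Lock) (n : ℕ) (T w : Thread) (L : Lock) : Prop :=
  (E.states n).pc T = PC.entrySpin ∧ (E.states n).pred T = some w ∧
    (E.states n).lk T = some L

/-- At time `n`, thread `T` is spinning on the word `Grant w`: its next step reads
    `Grant w` inside one of the two busy-wait loops (the entry-code loop with
    `pred = some w`, or the exit-code loop executed by `w` itself). -/
def spinningOn (E : Execution Thread Lock) (n : ℕ) (T w : Thread) : Prop :=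
  ((E.states n).pc T = PC.entrySpin ∧ (E.states n).pred T = some w) ∨
    (T = w ∧ (E.states n).pc T = PC.exitSpin)

/-- Lock `L` is associated with thread `T` at time `n`: `T` has executed the entry
    doorstep for `L` and has not yet completed the exit code for `L`. -/
def associated (E : Execution Thread Lock) (n : ℕ) (T : Thread) (L : Lock) : Prop :=
  ∃ m, m < n ∧ doorstepAt E m T L ∧ ∀ k, m < k → k < n → ¬ completesExitAt E k T L

/-!
Until `Tj` leaves its critical section for `L`, its `Grant` field is empty and it does not attempt
the CAS that would reset `Tail L`. Hence the next SWAP on `Tail L`, performed by `Ti`, still returns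
`Tj`, and `Ti` keeps spinning as long as `Grant Tj` stays empty.
-/

section Runs

variable {Thread Lock : Type}

/-- `t` is in the remainder section in `s` and has left it in `s'`, where its current lock is `L`.
This is `doorstepAt` for a pair of states; which thread takes the step is stated separately. -/
def IsDoorstep (t : Thread) (L : Lock) (s s' : St Thread Lock) : Prop :=
  s.pc t = .remainder ∧ s'.pc t ≠ .remainder ∧ s'.lk t = some L

/-- `t` is in the critical section protected by `L` in `s` and has left it in `s'`.
This is `exitsCSAt` for a pair of states; which thread takes the step is stated separately. -/
def IsCSExit (t : Thread) (L : Lock) (s s' : St Thread Lock) : Prop :=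
  s.pc t = .crit ∧ s.lk t = some L ∧ s'.pc t ≠ .crit

/-- `t` has executed the entry doorstep for `L` and has not completed the critical section yet. -/
def AwaitsOrHolds (s : St Thread Lock) (t : Thread) (L : Lock) : Prop :=
  inEntry s t L ∨ inCS s t L

/-- `t` is in the busy-wait loop of the entry code, with predecessor `p`. -/
def SpinsOn (s : St Thread Lock) (t p : Thread) : Prop :=
  s.pc t = .entrySpin ∧ s.pred t = some p

variable {r t p : Thread} {L : Lock} {s s' : St Thread Lock}

theorem AwaitsOrHolds.pc_ne_exitCAS (h : AwaitsOrHolds s t L) : s.pc t ≠ .exitCAS := by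
  rcases h with h | h <;> simp [h.1]

theorem AwaitsOrHolds.pc_ne_exitSpin (h : AwaitsOrHolds s t L) : s.pc t ≠ .exitSpin := by
  rcases h with h | h <;> simp [h.1]

variable [DecidableEq Thread] [DecidableEq Lock]

namespace Step

theorem pc_eq_of_ne (h : Step r s s') (ht : t ≠ r) : s'.pc t = s.pc t := by
  cases h <;> simp [ht]

theorem lk_eq_of_ne (h : Step r s s') (ht : t ≠ r) : s'.lk t = s.lk t := by
  cases h <;> simp [ht]

theorem pred_eq_of_ne (h : Step r s s') (ht : t ≠ r) : s'.pred t = s.pred t := by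
  cases h <;> simp [ht]

theorem tail_eq_of_isDoorstep (h : Step t s s') (hd : IsDoorstep t L s s') :
    s'.Tail L = some t := by
  obtain ⟨hpc, hpc', hlk'⟩ := hd
  cases h <;> simp_all

theorem awaitsOrHolds_of_isDoorstep (h : Step t s s') (hd : IsDoorstep t L s s') :
    AwaitsOrHolds s' t L := by
  obtain ⟨hpc, hpc', hlk'⟩ := hd
  cases h <;> simp_all [AwaitsOrHolds, inEntry, inCS, em']

theorem spinsOn_of_isDoorstep (h : Step t s s') (hd : IsDoorstep t L s s')
    (hp : s.Tail L = some p) : SpinsOn s' t p := by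
  obtain ⟨hpc, hpc', hlk'⟩ := hd
  cases h <;> simp_all [SpinsOn]

theorem awaitsOrHolds (h : Step r s s') (ht : AwaitsOrHolds s t L)
    (hexit : ¬ (r = t ∧ IsCSExit t L s s')) : AwaitsOrHolds s' t L := by
  by_cases htr : t = r
  · subst htr
    cases h <;> simp_all [AwaitsOrHolds, inEntry, inCS, IsCSExit]
  · simpa only [AwaitsOrHolds, inEntry, inCS, h.pc_eq_of_ne htr, h.lk_eq_of_ne htr] using ht

theorem tail_eq (h : Step r s s') (ht : s.Tail L = some t) (hpc : s.pc t ≠ .exitCAS)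
    (hdoor : ¬ IsDoorstep r L s s') : s'.Tail L = some t := by
  cases h <;> grind [IsDoorstep]

theorem spinsOn (h : Step r s s') (ht : SpinsOn s t p) (hp : s.Grant p = none) :
    SpinsOn s' t p := by
  obtain ⟨hpc, hpred⟩ := ht
  by_cases htr : t = r
  · subst htr
    cases h <;> simp_all [SpinsOn]
  · exact ⟨(h.pc_eq_of_ne htr).trans hpc, (h.pred_eq_of_ne htr).trans hpred⟩

theorem grant_eq_none (h : Step r s s') (hs : ∀ t, s.pc t ≠ .exitSpin → s.Grant t = none)
    (ht : s'.pc t ≠ .exitSpin) : s'.Grant t = none := by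
  cases h <;> grind

end Step

/-- A run of the transition system: what remains of an `Execution` without its liveness conditions
and without the finiteness of `Thread`. -/
structure IsRun (σ : ℕ → St Thread Lock) (τ : ℕ → Thread) : Prop where
  init : σ 0 = initSt
  step : ∀ n, Step (τ n) (σ n) (σ (n + 1))

theorem Execution.isRun [Fintype Thread] (E : Execution Thread Lock) :
    IsRun E.states E.sched :=
  ⟨E.init, E.steps⟩

namespace IsRun

variable {σ : ℕ → St Thread Lock} {τ : ℕ → Thread} {m n : ℕ}

-- A nonempty `Grant t` is written by `t` as it starts its exit spin, which ends only at `none`.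
theorem grant_eq_none (hσ : IsRun σ τ) (ht : (σ n).pc t ≠ .exitSpin) :
    (σ n).Grant t = none := by
  induction n generalizing t with
  | zero => simp [hσ.init, initSt]
  | succ n ih => exact (hσ.step n).grant_eq_none (fun _ ↦ ih) ht

theorem awaitsOrHolds (hσ : IsRun σ τ) (hmn : m ≤ n) (hm : AwaitsOrHolds (σ m) t L)
    (hexit : ∀ k, m ≤ k → k < n → ¬ (τ k = t ∧ IsCSExit t L (σ k) (σ (k + 1)))) :
    AwaitsOrHolds (σ n) t L := by
  induction n, hmn using Nat.le_induction with
  | base => exact hm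
  | succ n hmn ih =>
    exact (hσ.step n).awaitsOrHolds (ih fun k hk hkn ↦ hexit k hk (by lia))
      (hexit n hmn n.lt_succ_self)

theorem tail_eq (hσ : IsRun σ τ) (hmn : m ≤ n) (hm : (σ m).Tail L = some t)
    (hpc : ∀ k, m ≤ k → k < n → (σ k).pc t ≠ .exitCAS)
    (hdoor : ∀ k, m ≤ k → k < n → ¬ IsDoorstep (τ k) L (σ k) (σ (k + 1))) :
    (σ n).Tail L = some t := by
  induction n, hmn using Nat.le_induction with
  | base => exact hm
  | succ n hmn ih =>
    exact (hσ.step n).tail_eq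
      (ih (fun k hk hkn ↦ hpc k hk (by lia)) fun k hk hkn ↦ hdoor k hk (by lia))
      (hpc n hmn n.lt_succ_self) (hdoor n hmn n.lt_succ_self)

theorem spinsOn (hσ : IsRun σ τ) (hmn : m ≤ n) (hm : SpinsOn (σ m) t p)
    (hp : ∀ k, m ≤ k → k < n → (σ k).Grant p = none) : SpinsOn (σ n) t p := by
  induction n, hmn using Nat.le_induction with
  | base => exact hm
  | succ n hmn ih =>
    exact (hσ.step n).spinsOn (ih fun k hk hkn ↦ hp k hk (by lia)) (hp n hmn n.lt_succ_self)

end IsRun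

theorem no_skip_over_general {σ : ℕ → St Thread Lock} {τ : ℕ → Thread} (hσ : IsRun σ τ)
    {L : Lock} {Ti Tj : Thread} {ni nj m : ℕ}
    (hdj : τ nj = Tj ∧ IsDoorstep Tj L (σ nj) (σ (nj + 1)))
    (hdi : τ ni = Ti ∧ IsDoorstep Ti L (σ ni) (σ (ni + 1))) (hord : nj < ni)
    (hnext : ∀ k T, nj < k → k < ni → ¬ (τ k = T ∧ IsDoorstep T L (σ k) (σ (k + 1))))
    (hm : ni ≤ m) (hcrit : (σ (m + 1)).pc Ti = .crit) :
    ∃ k, nj < k ∧ k < m ∧ τ k = Tj ∧ IsCSExit Tj L (σ k) (σ (k + 1)) := by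
  by_contra! hexit
  obtain ⟨rfl, hdj⟩ := hdj
  obtain ⟨rfl, hdi⟩ := hdi
  have busy : ∀ k, nj < k → k ≤ m → AwaitsOrHolds (σ k) (τ nj) L := fun k hjk hkm ↦
    hσ.awaitsOrHolds hjk ((hσ.step nj).awaitsOrHolds_of_isDoorstep hdj)
      fun l hl hlk h ↦ hexit l hl (by lia) h.1 h.2
  have tail : (σ ni).Tail L = some (τ nj) :=
    hσ.tail_eq hord ((hσ.step nj).tail_eq_of_isDoorstep hdj)
      (fun k hk hki ↦ (busy k hk (by lia)).pc_ne_exitCAS)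
      fun k hk hki h ↦ hnext k (τ k) hk hki ⟨rfl, h⟩
  have spin : SpinsOn (σ (m + 1)) (τ ni) (τ nj) :=
    hσ.spinsOn (by lia) ((hσ.step ni).spinsOn_of_isDoorstep hdi tail)
      fun k hk hkm ↦ hσ.grant_eq_none (busy k (by lia) (by lia)).pc_ne_exitSpin
  simp [spin.1] at hcrit

end Runs

/-- If `Ti` is the next thread to execute the entry doorstep for `L` after `Tj`,
then `Ti` enters the critical section protected by `L` only after `Tj` has completed
its critical section protected by `L`. -/
theorem no_skip_over {Thread Lock : Type} [DecidableEq Thread] [DecidableEq Lock]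
    [Fintype Thread] (E : Execution Thread Lock) (L : Lock) (Ti Tj : Thread)
    (ni nj mi : ℕ)
    (hdj : doorstepAt E nj Tj L) (hdi : doorstepAt E ni Ti L) (hord : nj < ni)
    (hnext : ∀ k T, nj < k → k < ni → ¬ doorstepAt E k T L)
    (hmi : ni ≤ mi) (hent : entersCSAt E mi Ti L)
    (hfirst : ∀ k, ni ≤ k → k < mi → ¬ entersCSAt E k Ti L) :
    ∃ k, nj < k ∧ k < mi ∧ exitsCSAt E k Tj L :=
  no_skip_over_general E.isRun hdj hdi hord hnext hmi hent.2.2.1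

end Hemlock
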